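/- arXiv:2405.04022 — 2 statements merged into one kernel-verified Lean document; each statement's English description precedes it below -/
import Mathlib

section
/- Let R be a potential domain (a UFD such that all power series rings R[[X₁,…,Xₙ]] are UFDs) and s : (-ℕ)ⁿ → R an eventually rectilinear sequence. Then for each i ∈ {1,…,n}, the elimination ideal Ann(s) ∩ R[Xᵢ] is a principal ideal with a unique monic generator. -/
noncomputable section

variable {R : Type*}

/-- Right-shift action of a (multivariate) polynomial on a sequence indexed by `(-ℕ)^n`;
the index `a : σ → ℕ` encodes the point `-a`, so `(f ∘ s)_{-b} = ∑ f_a s_{-b-a}`. -/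
def shiftA [CommSemiring R] {σ : Type*} (f : MvPolynomial σ R) (s : (σ → ℕ) → R) :
    (σ → ℕ) → R :=
  fun b => ∑ a ∈ f.support, f.coeff a * s (fun j => b j + a j)

/-- The generating function `Γ(s) = ∑_{c ≤ 0} s_c X^c`, as a coefficient function on `ℤ^n`. -/
def GammaZ [Zero R] {n : ℕ} (s : (Fin n → ℕ) → R) : (Fin n → ℤ) → R :=
  fun c => if ∀ i, c i ≤ 0 then s (fun i => (-(c i)).toNat) else 0

/-- Coefficient function of the product `f · G` in the Laurent series ring
`R((X₁⁻¹, …, Xₙ⁻¹))`. -/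
def polyMulG [CommSemiring R] {n : ℕ} (f : MvPolynomial (Fin n) R) (G : (Fin n → ℤ) → R) :
    (Fin n → ℤ) → R :=
  fun c => ∑ a ∈ f.support, f.coeff a * G (fun i => c i - (a i : ℤ))

/-- Vector of partial degrees `δᵢ f`. -/
def degV [CommSemiring R] {n : ℕ} (f : MvPolynomial (Fin n) R) : Fin n → ℕ :=
  fun i => f.support.sup fun a => a i

/-- `degV` as a finitely supported function. -/
def degE [CommSemiring R] {n : ℕ} (f : MvPolynomial (Fin n) R) : Fin n →₀ ℕ :=
  Finsupp.equivFunOnFinite.symm (degV f)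

/-- Embedding of `R[Xᵢ]` into `R[X₁,…,Xₙ]`. -/
def embedP [CommSemiring R] {n : ℕ} (i : Fin n) (p : Polynomial R) : MvPolynomial (Fin n) R :=
  Polynomial.eval₂ MvPolynomial.C (MvPolynomial.X i) p

def toExp {n : ℕ} (c : Fin n → ℤ) : Fin n →₀ ℕ :=
  Finsupp.equivFunOnFinite.symm fun i => (c i).toNat

/-- The coefficient function on `ℤ^n` of a polynomial. -/
def toCoeffZ [CommSemiring R] {n : ℕ} (g : MvPolynomial (Fin n) R) : (Fin n → ℤ) → R :=
  fun c => if ∀ i, 0 ≤ c i then g.coeff (toExp c) else 0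

def oneExp {n : ℕ} : Fin n →₀ ℕ := Finsupp.equivFunOnFinite.symm 1

/-- The border polynomial `β₀(f,s) = (f·Γ(s)) | [1, deg f]`. -/
def mvBeta0 [CommRing R] {n : ℕ} (f : MvPolynomial (Fin n) R) (s : (Fin n → ℕ) → R) :
    MvPolynomial (Fin n) R :=
  ∑ c ∈ Finset.Icc oneExp (degE f),
    MvPolynomial.monomial c (polyMulG f (GammaZ s) fun i => (c i : ℤ))

/-- `β₀(f,s) / (X₁⋯Xₙ)`. -/
def mvBeta0Div [CommRing R] {n : ℕ} (f : MvPolynomial (Fin n) R) (s : (Fin n → ℕ) → R) :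
    MvPolynomial (Fin n) R :=
  ∑ c ∈ Finset.Icc oneExp (degE f),
    MvPolynomial.monomial (c - oneExp) (polyMulG f (GammaZ s) fun i => (c i : ℤ))

/-- `β₀(f,s) / Xᵢ`. -/
def mvBeta0DivXi [CommRing R] {n : ℕ} (i : Fin n) (f : MvPolynomial (Fin n) R)
    (s : (Fin n → ℕ) → R) : MvPolynomial (Fin n) R :=
  ∑ c ∈ Finset.Icc oneExp (degE f),
    MvPolynomial.monomial (c - Finsupp.single i 1) (polyMulG f (GammaZ s) fun i => (c i : ℤ))

/-- Generalized Newton divided difference `ν^a f = (f | [a, deg f]) / X^a`. -/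
def nuA [CommRing R] {n : ℕ} (a : Fin n →₀ ℕ) (f : MvPolynomial (Fin n) R) :
    MvPolynomial (Fin n) R :=
  ∑ b ∈ Finset.Icc a (degE f), MvPolynomial.monomial (b - a) (f.coeff b)

/-!
`Ann(s) ∩ R[Xᵢ]` is the common kernel `I` of a family of `R`-linear functionals on `R[X]`, namely
`f ↦ (f ∘ s)_b`. Let `p ∈ I` be nonzero of minimal degree `d`, and let `g` be `p` divided by its
leading coefficient, over the fraction field `K`. Minimality of `d` provides functionals `L_j`
vanishing on `I`, with `L_j (X ^ j) ≠ 0` and `L_j (X ^ i) = 0` for the other `i < d`. Over `K` they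
read off the remainders modulo `g` up to the factor `L_j (X ^ j)`, so the product `c` of these
factors is a common denominator of all remainders `X ^ k mod g`, that is, of all powers of the
companion matrix of `g`. Taking determinants, powers of `g` have a common denominator, so the
coefficients of `g` are almost integral over `R`, and hence lie in `R` when `R` is completely
integrally closed. Finally `g ∈ I`, since `R[X] ⧸ I` is torsion-free.
-/

section DualClosure

open Submodule

variable [CommRing R] {M : Type*} [AddCommGroup M] [Module R M]

/-- Submodules `N` for which `M ⧸ N` is torsionless, i.e. embeds into its double dual: `N` is the
common kernel of the functionals vanishing on `N`. -/
def IsDualClosed (N : Submodule R M) : Prop :=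
  N.dualAnnihilator.dualCoannihilator = N

/-- Submodules `N` for which the quotient of `M ⧸ N` by its torsion is torsionless. Unlike
`IsDualClosed`, this property survives enlarging `N` by finitely many elements. -/
def IsDualSaturated (N : Submodule R M) : Prop :=
  ∀ x ∈ N.dualAnnihilator.dualCoannihilator, ∃ r : R, r ≠ 0 ∧ r • x ∈ N

theorem isDualClosed_bot_pi (ι : Type*) : IsDualClosed (⊥ : Submodule R (ι → R)) :=
  (Submodule.eq_bot_iff _).mpr fun x hx => funext fun i =>
    (mem_dualCoannihilator x).mp hx (LinearMap.proj i) (by simp)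

theorem IsDualClosed.comap {M' : Type*} [AddCommGroup M'] [Module R M'] {N : Submodule R M'}
    (hN : IsDualClosed N) (f : M →ₗ[R] M') : IsDualClosed (N.comap f) := by
  refine le_antisymm (fun x hx => ?_) (le_dualAnnihilator_dualCoannihilator _)
  rw [mem_comap, ← hN, mem_dualCoannihilator]
  exact fun l hl => (mem_dualCoannihilator x).mp hx (l ∘ₗ f) <|
    (mem_dualAnnihilator _).mpr fun y hy => (mem_dualAnnihilator l).mp hl _ hy

theorem IsDualClosed.isDualSaturated [Nontrivial R] {N : Submodule R M} (hN : IsDualClosed N) :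
    IsDualSaturated N :=
  fun x hx => ⟨1, one_ne_zero, by rwa [one_smul, ← hN]⟩

theorem IsDualClosed.mem_of_smul_mem [IsDomain R] {N : Submodule R M} (hN : IsDualClosed N)
    {r : R} (hr : r ≠ 0) {x : M} (hx : r • x ∈ N) : x ∈ N := by
  rw [← hN, mem_dualCoannihilator]
  intro l hl
  have hlx := (mem_dualAnnihilator l).mp hl _ hx
  rw [map_smul, smul_eq_mul] at hlx
  exact (mul_eq_zero.mp hlx).resolve_left hr

theorem IsDualSaturated.sup_span_singleton [IsDomain R] {N : Submodule R M}
    (hN : IsDualSaturated N) (y : M) : IsDualSaturated (N ⊔ R ∙ y) := by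
  -- Two functionals `l`, `m` vanishing on `N` combine to `m y • l - l y • m`, which also kills `y`.
  -- So if `m y ≠ 0` is fixed, every `l` kills `m y • x - m x • y`.
  intro x hx
  have hvanish : ∀ l ∈ N.dualAnnihilator, l y = 0 → l x = 0 := by
    intro l hl hly
    refine (mem_dualCoannihilator x).mp hx l ?_
    rw [dualAnnihilator_sup_eq]
    refine ⟨hl, (mem_dualAnnihilator l).mpr fun w hw => ?_⟩
    obtain ⟨a, rfl⟩ := mem_span_singleton.mp hw
    rw [map_smul, hly, smul_zero]
  by_cases hy : ∀ m ∈ N.dualAnnihilator, m y = 0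
  · obtain ⟨r, hr, hrx⟩ := hN x <|
      (mem_dualCoannihilator x).mpr fun l hl => hvanish l hl (hy l hl)
    exact ⟨r, hr, mem_sup_left hrx⟩
  · push Not at hy
    obtain ⟨m, hm, hmy⟩ := hy
    have hx' : m y • x - m x • y ∈ N.dualAnnihilator.dualCoannihilator := by
      refine (mem_dualCoannihilator _).mpr fun l hl => ?_
      have := hvanish (m y • l - l y • m)
        (sub_mem (smul_mem _ _ hl) (smul_mem _ _ hm)) (by simp [mul_comm])
      simpa [mul_comm] using this
    obtain ⟨r, hr, hrx⟩ := hN _ hx'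
    refine ⟨r * m y, mul_ne_zero hr hmy, ?_⟩
    have hsplit : (r * m y) • x = r • (m y • x - m x • y) + (r * m x) • y := by module
    rw [hsplit]
    exact add_mem (mem_sup_left hrx)
      (mem_sup_right (smul_mem _ _ (mem_span_singleton_self y)))

theorem IsDualSaturated.sup_of_fg [IsDomain R] {N F : Submodule R M}
    (hN : IsDualSaturated N) (hF : F.FG) : IsDualSaturated (N ⊔ F) := by
  induction F, hF using Submodule.fg_induction generalizing N with
  | singleton y => exact hN.sup_span_singleton y
  | sup F₁ F₂ _ _ h₁ h₂ =>
    rw [← sup_assoc]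
    exact h₂ (h₁ hN)

end DualClosure

section CompletelyIntegrallyClosed

open Polynomial

theorem completeIntegralClosure_eq_bot_of_uniqueFactorizationMonoid (R K : Type*) [CommRing R]
    [IsDomain R] [UniqueFactorizationMonoid R] [Field K] [Algebra R K] [IsFractionRing R K] :
    completeIntegralClosure R K = ⊥ := by
  refine eq_bot_iff.mpr fun x ⟨r, hr, hrx⟩ => ?_
  set a := IsFractionRing.num R x
  set b := (IsFractionRing.den R x : R)
  have hb : algebraMap R K b ≠ 0 := by
    rw [Ne, FaithfulSMul.algebraMap_eq_zero_iff]
    exact nonZeroDivisors.ne_zero (IsFractionRing.den R x).2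
  have hbr : ∀ n, b ^ n ∣ r := by
    intro n
    obtain ⟨t, ht⟩ := hrx n
    have hxab : x = algebraMap R K a / algebraMap R K b := (IsFractionRing.mk'_num_den' R x).symm
    have heq : b ^ n * t = r * a ^ n := by
      apply IsFractionRing.injective R K
      simp only [map_mul, map_pow, ht, hxab, Algebra.smul_def, div_pow]
      field_simp
    have hrel : IsRelPrime (b ^ n) (a ^ n) := (IsFractionRing.num_den_reduced R x).symm.pow
    exact hrel.dvd_of_dvd_mul_right ⟨t, heq.symm⟩
  have hunit : IsUnit b := by
    by_contra h
    obtain ⟨n, hn⟩ := FiniteMultiplicity.of_not_isUnit h (nonZeroDivisors.ne_zero hr)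
    exact hn (hbr _)
  obtain ⟨t, ht⟩ := IsFractionRing.isInteger_of_isUnit_den hunit
  exact Algebra.mem_bot.mpr ⟨t, ht⟩

variable [CommRing R] {S n : Type*} [CommRing S] [Algebra R S] [Fintype n] [DecidableEq n]

theorem smul_charmatrix_pow_mem_range {M : Matrix n n S} {c : R}
    (h : ∀ k, c • M ^ k ∈ (algebraMap R S).mapMatrix.range) (k : ℕ) :
    C (algebraMap R S c) • M.charmatrix ^ k ∈ (mapRingHom (algebraMap R S)).mapMatrix.range := by
  set A := (mapRingHom (algebraMap R S)).mapMatrix (m := n) |>.range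
  have hX : Matrix.scalar n (X : S[X]) ∈ A := ⟨Matrix.scalar n X, by simp⟩
  have hM : ∀ m, C (algebraMap R S c) • (C.mapMatrix M) ^ m ∈ A := by
    intro m
    obtain ⟨P, hP⟩ := h m
    refine ⟨C.mapMatrix P, ?_⟩
    rw [← map_pow]
    ext i j : 1
    have := congrArg C (congrFun (congrFun hP i) j)
    simpa [Algebra.smul_def] using this
  have hcomm : Commute (Matrix.scalar n (X : S[X])) (-C.mapMatrix M) :=
    Matrix.scalar_commute _ (Commute.all _) _
  rw [Matrix.charmatrix, sub_eq_add_neg, hcomm.add_pow, Finset.smul_sum]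
  refine sum_mem fun m _ => ?_
  rw [← smul_mul_assoc, ← mul_smul_comm, neg_pow, ← mul_smul_comm]
  exact mul_mem (mul_mem (pow_mem hX _) (mul_mem (pow_mem (neg_mem (one_mem A)) _) (hM _)))
    (natCast_mem A _)

theorem isAlmostIntegral_coeff_charpoly [IsDomain R] [FaithfulSMul R S] {M : Matrix n n S} {c : R}
    (hc : c ≠ 0) (h : ∀ k, c • M ^ k ∈ (algebraMap R S).mapMatrix.range) (i : ℕ) :
    IsAlmostIntegral R (M.charpoly.coeff i) := by
  let : Algebra R[X] S[X] := Polynomial.algebra R S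
  -- `det (c • (X - M)ᵏ) = c ^ card n * charpoly ^ k`, so one constant clears all denominators.
  refine IsAlmostIntegral.coeff ⟨C c ^ Fintype.card n, ?_, fun k => ?_⟩ i
  · exact pow_mem (mem_nonZeroDivisors_of_ne_zero (C_ne_zero.mpr hc)) _
  obtain ⟨P, hP⟩ := smul_charmatrix_pow_mem_range h k
  refine ⟨P.det, ?_⟩
  calc mapRingHom (algebraMap R S) P.det
      = (C (algebraMap R S c) • M.charmatrix ^ k).det := by rw [RingHom.map_det, hP]
    _ = C (algebraMap R S c) ^ Fintype.card n * M.charpoly ^ k := by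
        rw [Matrix.det_smul, Matrix.det_pow, Matrix.charpoly]
    _ = C c ^ Fintype.card n • M.charpoly ^ k := by
        simp [Algebra.smul_def, algebraMap_def]

theorem isAlmostIntegral_coeff_of_modByMonic {K : Type*} [Field K] [IsDomain R] [Algebra R K]
    [FaithfulSMul R K] {g : K[X]} (hg : g.Monic) {c : R} (hc : c ≠ 0)
    (h : ∀ k j, j < g.natDegree → c • (X ^ k %ₘ g).coeff j ∈ (algebraMap R K).range) (i : ℕ) :
    IsAlmostIntegral R (g.coeff i) := by
  set B := AdjoinRoot.powerBasis' hg with hB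
  have hcharpoly : (Algebra.leftMulMatrix B.basis B.gen).charpoly = g := by
    rw [charpoly_leftMulMatrix, hB, AdjoinRoot.powerBasis'_gen, AdjoinRoot.minpoly_root hg.ne_zero]
    simp [hg.leadingCoeff]
  rw [← hcharpoly]
  refine isAlmostIntegral_coeff_charpoly hc (fun k => ?_) i
  have hentry : ∀ a b, (Algebra.leftMulMatrix B.basis B.gen ^ k) a b
      = (X ^ (k + b) %ₘ g).coeff a := by
    intro a b
    rw [← map_pow, Algebra.leftMulMatrix_eq_repr_mul, B.basis_eq_pow, ← pow_add,
      ← AdjoinRoot.modByMonicHom_mk hg, map_pow (AdjoinRoot.mk g), AdjoinRoot.mk_X]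
    exact AdjoinRoot.powerBasisAux'_repr_apply_to_fun hg _ a
  choose P hP using fun a b : Fin B.dim => h (k + b) a a.2
  refine ⟨Matrix.of P, ?_⟩
  ext a b
  simp [hP, hentry]

end CompletelyIntegrallyClosed

section PolynomialIdeals

open Polynomial Submodule

theorem eq_span_singleton_of_monic_of_natDegree_minimal [CommRing R] {I : Ideal R[X]} {g : R[X]}
    (hg : g.Monic) (hgI : g ∈ I) (hmin : ∀ f ∈ I, f ≠ 0 → g.natDegree ≤ f.natDegree) :
    I = Ideal.span {g} := by
  refine le_antisymm (fun f hf => ?_) ((Ideal.span_singleton_le_iff_mem I).mpr hgI)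
  rw [Ideal.mem_span_singleton, ← modByMonic_eq_zero_iff_dvd hg]
  have hmod : f %ₘ g ∈ I := by
    rw [modByMonic_eq_sub_mul_div]
    exact sub_mem hf (I.mul_mem_right _ hgI)
  by_contra h
  have hg1 : g ≠ 1 := by
    rintro rfl
    exact h (modByMonic_one f)
  exact (natDegree_modByMonic_lt f hg hg1).not_ge (hmin _ hmod h)

theorem exists_dual_apply_X_pow_ne_zero [CommRing R] [IsDomain R] {I : Ideal R[X]}
    (hI : IsDualSaturated (I.restrictScalars R)) {d : ℕ}
    (hd : ∀ f ∈ I, f ≠ 0 → d ≤ f.natDegree) {j : ℕ} (hj : j < d) :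
    ∃ L ∈ (I.restrictScalars R).dualAnnihilator,
      (∀ i < d, i ≠ j → L (X ^ i) = 0) ∧ L (X ^ j) ≠ 0 := by
  set F := span R ((fun i => (X : R[X]) ^ i) '' (Set.Iio d \ {j}))
  have hFfg : F.FG := fg_span (((Set.finite_Iio d).sdiff).image _)
  by_contra! hcon
  have hXj : X ^ j ∈ (I.restrictScalars R ⊔ F).dualAnnihilator.dualCoannihilator := by
    refine (mem_dualCoannihilator _).mpr fun L hL => ?_
    rw [dualAnnihilator_sup_eq] at hL
    exact hcon L hL.1 fun i hi hij =>
      (mem_dualAnnihilator L).mp hL.2 _ (subset_span ⟨i, ⟨hi, hij⟩, rfl⟩)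
  obtain ⟨r, hr, hmem⟩ := hI.sup_of_fg hFfg _ hXj
  obtain ⟨q, hq, f, hf, hqf⟩ := mem_sup.mp hmem
  obtain ⟨hfdeg, hfj⟩ : f ∈ degreeLT R d ⊓ LinearMap.ker (lcoeff R j) := by
    refine span_le.mpr ?_ hf
    rintro _ ⟨i, ⟨hi, hij⟩, rfl⟩
    refine ⟨mem_degreeLT.mpr ?_, ?_⟩
    · simpa using hi
    · simpa [coeff_X_pow] using Ne.symm hij
  have hqdeg : q ∈ degreeLT R d := by
    rw [eq_sub_of_add_eq hqf]
    refine sub_mem (smul_mem _ _ (mem_degreeLT.mpr ?_)) hfdeg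
    simpa using hj
  have hq0 : q = 0 := by
    by_contra h
    exact (hd q hq h).not_gt ((natDegree_lt_iff_degree_lt h).mpr (mem_degreeLT.mp hqdeg))
  have hcoeff : f.coeff j = r := by rw [← zero_add f, ← hq0, hqf]; simp
  exact hr (hcoeff.symm.trans hfj)

section FractionField

variable [CommRing R] {K : Type*} [Field K] [Algebra R K]

theorem exists_dual_map_eq_algebraMap (K : Type*) [Field K] [Algebra R K]
    (L : Module.Dual R R[X]) :
    ∃ Λ : Module.Dual K K[X], ∀ f, Λ (f.map (algebraMap R K)) = algebraMap R K (L f) := by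
  refine ⟨lsum fun k => algebraMap R K (L (X ^ k)) • LinearMap.id, fun f => ?_⟩
  induction f using Polynomial.induction_on' with
  | add f g hf hg => rw [Polynomial.map_add, map_add, hf, hg, map_add, map_add]
  | monomial k r =>
    rw [map_monomial, lsum_apply, sum_monomial_index _ _ (by simp), ← smul_X_eq_monomial, map_smul]
    simp [Algebra.smul_def, mul_comm]

variable [IsDomain R] [IsFractionRing R K]

theorem dual_apply_eq_zero_of_map_dvd {I : Ideal R[X]} {L : Module.Dual R R[X]}
    (hL : L ∈ (I.restrictScalars R).dualAnnihilator) {Λ : Module.Dual K K[X]}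
    (hΛ : ∀ f, Λ (f.map (algebraMap R K)) = algebraMap R K (L f)) {p : R[X]} (hp : p ∈ I)
    {h : K[X]} (hdvd : p.map (algebraMap R K) ∣ h) : Λ h = 0 := by
  obtain ⟨q, rfl⟩ := hdvd
  obtain ⟨b, hb0, hb⟩ := IsLocalization.integerNormalization_spec (nonZeroDivisors R) q
  set q' := IsLocalization.integerNormalization (nonZeroDivisors R) q
  have hb' : algebraMap R K b ≠ 0 := by
    rw [Ne, FaithfulSMul.algebraMap_eq_zero_iff]
    exact nonZeroDivisors.ne_zero hb0
  have hmul : (p * q').map (algebraMap R K)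
      = algebraMap R K b • (p.map (algebraMap R K) * q) := by
    rw [Polynomial.map_mul, hb, algebraMap_smul, mul_smul_comm]
  have hzero : algebraMap R K b * Λ (p.map (algebraMap R K) * q) = 0 := by
    rw [← smul_eq_mul, ← map_smul, ← hmul, hΛ,
      (mem_dualAnnihilator L).mp hL _ (I.mul_mem_right q' hp), map_zero]
  exact (mul_eq_zero.mp hzero).resolve_left hb'

theorem algebraMap_dual_apply_eq_mul_coeff_modByMonic {I : Ideal R[X]} {L : Module.Dual R R[X]}
    (hL : L ∈ (I.restrictScalars R).dualAnnihilator) {p : R[X]} (hp : p ∈ I) {g : K[X]}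
    (hg : g.Monic) (hpg : p.map (algebraMap R K) ∣ g) {j : ℕ} (hj : j < g.natDegree)
    (hLj : ∀ i < g.natDegree, i ≠ j → L (X ^ i) = 0) (f : R[X]) :
    algebraMap R K (L f) =
      algebraMap R K (L (X ^ j)) * (f.map (algebraMap R K) %ₘ g).coeff j := by
  obtain ⟨Λ, hΛ⟩ := exists_dual_map_eq_algebraMap K L
  have hΛX : ∀ i, Λ (X ^ i) = algebraMap R K (L (X ^ i)) := fun i => by simp [← hΛ]
  set F := f.map (algebraMap R K)
  calc algebraMap R K (L f) = Λ (F %ₘ g + g * (F /ₘ g)) := by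
        rw [modByMonic_add_div F g, hΛ]
    _ = Λ (F %ₘ g) := by
        rw [map_add, dual_apply_eq_zero_of_map_dvd hL hΛ hp (hpg.mul_right _), add_zero]
    _ = Λ (∑ i : Fin g.natDegree, monomial i ((F %ₘ g).coeff i)) := by
        rw [sum_modByMonic_coeff hg degree_le_natDegree]
    _ = ∑ i : Fin g.natDegree, (F %ₘ g).coeff i * algebraMap R K (L (X ^ (i : ℕ))) := by
        simp [← smul_X_eq_monomial, hΛX]
    _ = algebraMap R K (L (X ^ j)) * (F %ₘ g).coeff j := by
        rw [Finset.sum_eq_single ⟨j, hj⟩ _ (by simp), mul_comm]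
        intro i _ hi
        rw [hLj i i.2 (by simpa [Fin.ext_iff] using hi), map_zero, mul_zero]

theorem isAlmostIntegral_coeff_of_isDualSaturated {I : Ideal R[X]}
    (hI : IsDualSaturated (I.restrictScalars R)) {p : R[X]} (hp : p ∈ I) {g : K[X]}
    (hg : g.Monic) (hpg : p.map (algebraMap R K) ∣ g)
    (hmin : ∀ f ∈ I, f ≠ 0 → g.natDegree ≤ f.natDegree) (i : ℕ) :
    IsAlmostIntegral R (g.coeff i) := by
  choose L hLI hL0 hLX using fun j : Fin g.natDegree =>
    exists_dual_apply_X_pow_ne_zero hI hmin j.2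
  refine isAlmostIntegral_coeff_of_modByMonic hg (c := ∏ j, L j (X ^ (j : ℕ)))
    (Finset.prod_ne_zero_iff.mpr fun j _ => hLX j) (fun k j hj => ?_) i
  obtain ⟨t, ht⟩ := Finset.dvd_prod_of_mem (fun j => L j (X ^ (j : ℕ))) (Finset.mem_univ ⟨j, hj⟩)
  have hk := algebraMap_dual_apply_eq_mul_coeff_modByMonic (hLI ⟨j, hj⟩) hp hg hpg hj
    (hL0 ⟨j, hj⟩) (X ^ k)
  refine ⟨t * L ⟨j, hj⟩ (X ^ k), ?_⟩
  rw [ht, Algebra.smul_def, map_mul, map_mul, hk, Polynomial.map_pow, map_X]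
  ring

theorem existsUnique_monic_eq_span_singleton (hR : completeIntegralClosure R K = ⊥)
    {I : Ideal R[X]} (hI : IsDualClosed (I.restrictScalars R)) (hI0 : I ≠ ⊥) :
    ∃! g : R[X], g.Monic ∧ I = Ideal.span {g} := by
  obtain ⟨p, ⟨hpI, hp0⟩, hpmin⟩ := exists_minimalFor_of_wellFoundedLT
    (fun p : R[X] => p ∈ I ∧ p ≠ 0) natDegree (I.ne_bot_iff.mp hI0)
  have hmin : ∀ f ∈ I, f ≠ 0 → p.natDegree ≤ f.natDegree := fun f hf hf0 =>
    (le_total _ _).elim id (hpmin ⟨hf, hf0⟩)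
  set P := p.map (algebraMap R K)
  have hP0 : P ≠ 0 := (Polynomial.map_ne_zero_iff (IsFractionRing.injective R K)).mpr hp0
  have hdeg : (P * C P.leadingCoeff⁻¹).natDegree = p.natDegree := by
    rw [natDegree_mul_leadingCoeff_inv P hP0,
      natDegree_map_eq_of_injective (IsFractionRing.injective R K)]
  have hmonic : (P * C P.leadingCoeff⁻¹).Monic := monic_mul_leadingCoeff_inv hP0
  have hlift : P * C P.leadingCoeff⁻¹ ∈ lifts (algebraMap R K) := by
    refine (lifts_iff_coeff_lifts _).mpr fun i => ?_
    have := isAlmostIntegral_coeff_of_isDualSaturated hI.isDualSaturated hpI hmonic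
      (dvd_mul_right _ _) (hdeg ▸ hmin) i
    rw [← mem_completeIntegralClosure, hR] at this
    exact Algebra.mem_bot.mp this
  obtain ⟨g, hgP, hgdeg, hg⟩ := lifts_and_natDegree_eq_and_monic hlift hmonic
  have hpg : p.leadingCoeff • g = p := by
    apply map_injective _ (IsFractionRing.injective R K)
    rw [smul_eq_C_mul, Polynomial.map_mul, map_C, hgP,
      ← leadingCoeff_map_of_injective (IsFractionRing.injective R K), mul_left_comm, ← C_mul,
      mul_inv_cancel₀ (leadingCoeff_ne_zero.mpr hP0), C_1, mul_one]
  have hgI : g ∈ I := hI.mem_of_smul_mem (leadingCoeff_ne_zero.mpr hp0)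
    (show p.leadingCoeff • g ∈ I.restrictScalars R from hpg.symm ▸ hpI)
  have hspan := eq_span_singleton_of_monic_of_natDegree_minimal hg hgI
    (by rwa [hgdeg, hdeg])
  refine ⟨g, ⟨hg, hspan⟩, fun g' ⟨hg', hspan'⟩ => eq_of_monic_of_associated hg' hg ?_⟩
  exact Ideal.span_singleton_eq_span_singleton.mp (hspan'.symm.trans hspan)

theorem existsUnique_monic_aeval_apply_eq_zero_iff_dvd (hR : completeIntegralClosure R K = ⊥)
    {V : Type*} [AddCommGroup V] [Module R V] (hV : IsDualClosed (⊥ : Submodule R V))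
    (φ : Module.End R V) (v : V) (hex : ∃ p : R[X], p ≠ 0 ∧ aeval φ p v = 0) :
    ∃! g : R[X], g.Monic ∧ ∀ p : R[X], aeval φ p v = 0 ↔ g ∣ p := by
  set I := Ideal.torsionOf R[X] (Module.AEval' φ) (Module.AEval'.of φ v)
  have hmem : ∀ p, p ∈ I ↔ aeval φ p v = 0 := fun _ => Iff.rfl
  have hI : IsDualClosed (I.restrictScalars R) :=
    hV.comap (LinearMap.applyₗ v ∘ₗ (aeval φ).toLinearMap)
  obtain ⟨p, hp0, hp⟩ := hex
  simpa only [SetLike.ext_iff, Ideal.mem_span_singleton, hmem] using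
    existsUnique_monic_eq_span_singleton hR hI ((Submodule.ne_bot_iff _).mpr ⟨p, hp, hp0⟩)

end FractionField

end PolynomialIdeals

section Sequences

open Polynomial

theorem shiftA_apply [CommSemiring R] {σ : Type*} (f : MvPolynomial σ R) (s : (σ → ℕ) → R)
    (b : σ → ℕ) : shiftA f s b = (AddMonoidAlgebra.coeff f).sum fun a r => r * s (b + a) := by
  rw [MvPolynomial.sum_def]
  rfl

theorem shiftA_add [CommSemiring R] {σ : Type*} (f g : MvPolynomial σ R) (s : (σ → ℕ) → R) :
    shiftA (f + g) s = shiftA f s + shiftA g s := by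
  funext b
  simp only [shiftA_apply, Pi.add_apply, AddMonoidAlgebra.coeff_add]
  exact Finsupp.sum_add_index' (fun _ => zero_mul _) fun _ _ _ => add_mul _ _ _

theorem shiftA_monomial [CommSemiring R] {σ : Type*} (a : σ →₀ ℕ) (r : R) (s : (σ → ℕ) → R)
    (b : σ → ℕ) : shiftA (MvPolynomial.monomial a r) s b = r * s (b + a) := by
  rw [shiftA_apply]
  exact MvPolynomial.sum_monomial_eq (zero_mul _)

/-- The right shift in the `i`-th coordinate, as a linear endomorphism of sequences: the action of
`Xᵢ` under `shiftA`. -/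
def shiftEnd (R : Type*) [CommSemiring R] {σ : Type*} [DecidableEq σ] (i : σ) :
    Module.End R ((σ → ℕ) → R) :=
  LinearMap.funLeft R R (· + Pi.single i 1)

theorem shiftEnd_pow_apply [CommSemiring R] {σ : Type*} [DecidableEq σ] (i : σ) (k : ℕ)
    (s : (σ → ℕ) → R) (b : σ → ℕ) : (shiftEnd R i ^ k) s b = s (b + Pi.single i k) := by
  induction k generalizing b with
  | zero => simp
  | succ k ih =>
    rw [pow_succ', Module.End.mul_apply, shiftEnd, LinearMap.funLeft_apply, ← shiftEnd, ih,
      add_assoc, ← Pi.single_add, add_comm 1 k]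

theorem shiftA_embedP [CommSemiring R] {n : ℕ} (i : Fin n) (p : R[X]) (s : (Fin n → ℕ) → R) :
    shiftA (embedP i p) s = aeval (shiftEnd R i) p s := by
  induction p using Polynomial.induction_on' with
  | add p q hp hq =>
    rw [embedP, eval₂_add, shiftA_add, ← embedP, ← embedP, hp, hq, map_add, LinearMap.add_apply]
  | monomial k r =>
    funext b
    rw [embedP, eval₂_monomial, MvPolynomial.C_mul_X_pow_eq_monomial, shiftA_monomial,
      aeval_monomial, Module.End.mul_apply, Module.algebraMap_end_apply, Pi.smul_apply,
      shiftEnd_pow_apply, smul_eq_mul, Finsupp.single_eq_pi_single]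

theorem stmt13_general [CommRing R] [IsDomain R] {K : Type*} [Field K] [Algebra R K]
    [IsFractionRing R K] (hR : completeIntegralClosure R K = ⊥) {n : ℕ} (s : (Fin n → ℕ) → R)
    (i : Fin n) (hex : ∃ p : R[X], p ≠ 0 ∧ shiftA (embedP i p) s = 0) :
    ∃! g : R[X], g.Monic ∧ ∀ p : R[X], (shiftA (embedP i p) s = 0 ↔ g ∣ p) := by
  simp only [shiftA_embedP] at hex ⊢
  exact existsUnique_monic_aeval_apply_eq_zero_iff_dvd hR (isDualClosed_bot_pi _) _ s hex

end Sequences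

/-- over a potential domain (a UFD all of whose power series rings are UFDs),
for an eventually rectilinear sequence `s`, each elimination ideal `Ann(s) ∩ R[Xᵢ]` is
principal with a unique monic generator. -/
theorem stmt13 [CommRing R] [IsDomain R] [UniqueFactorizationMonoid R] {n : ℕ}
    (hpot : ∀ m : ℕ,
      haveI : IsDomain (MvPowerSeries (Fin m) R) := NoZeroDivisors.to_isDomain _
      UniqueFactorizationMonoid (MvPowerSeries (Fin m) R))
    (s : (Fin n → ℕ) → R)
    (hevr : ∀ i : Fin n, ∃ p : Polynomial R, 1 ≤ p.natDegree ∧ shiftA (embedP i p) s = 0) :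
    ∀ i : Fin n, ∃! g : Polynomial R,
      g.Monic ∧ ∀ p : Polynomial R, (shiftA (embedP i p) s = 0 ↔ g ∣ p) :=
  fun i => stmt13_general
    (completeIntegralClosure_eq_bot_of_uniqueFactorizationMonoid R (FractionRing R)) s i <|
    (hevr i).imp fun _ hp => ⟨Polynomial.ne_zero_of_natDegree_gt hp.1, hp.2⟩
end
end

section
/- A linear recurring sequence s : (-ℕ)ⁿ → R whose annihilator contains a cofinite ideal is eventually rectilinear. Conversely, if R is a potential domain and s is eventually rectilinear, then Ann(s) contains a cofinite ideal. -/
noncomputable section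

variable {R : Type*}

/-
Write `A = R[X₁, …, Xₙ] / Ann(s)`. The map `g ↦ g ∘ s` embeds `A` `R`-linearly into the sequences,
so the `R`-linear functionals on `A` separate its points. Ann(s) contains a cofinite ideal if and
only if `A` is finite over `R`, i.e. every `Xᵢ` is integral in `A`, whereas `s` is eventually
rectilinear if and only if every `Xᵢ` is algebraic in `A`.

To see that an algebraic `x ∈ A` is integral, let `K = Frac R`. Functionals `f₁, …, f_d` form a
basis of the dual of `K[x] ⊆ K ⊗ A`, and `fᵢ (x ^ (k + j)) ∈ R` for all `k` and `j`. Clearing the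
denominators of the base change by the determinant `δ` of the matrix `(fᵢ (x ^ j))`, the matrix `M`
of multiplication by `x` satisfies: `δ • M ^ k` has entries in `R` for all `k`. Hence
`δ ^ d * det (X - M) ^ k ∈ R[X]` for all `k`, which makes the coefficients of the characteristic
polynomial almost integral over `R`. They are integral when `R` is a UFD, and then so is `x`.
-/

open Polynomial TensorProduct nonZeroDivisors

theorem completeIntegralClosure_le_integralClosure_of_uniqueFactorizationMonoid (R K : Type*)
    [CommRing R] [IsDomain R] [UniqueFactorizationMonoid R] [Field K] [Algebra R K]
    [IsFractionRing R K] : completeIntegralClosure R K ≤ integralClosure R K := by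
  rintro x ⟨r, hr, hx⟩
  obtain ⟨a, b, hab, rfl⟩ := IsFractionRing.exists_reduced_fraction R x
  have hdvd (k : ℕ) : (b : R) ^ k ∣ r := by
    obtain ⟨c, hc⟩ := hx k
    refine (hab.symm.pow (m := k) (n := k)).dvd_of_dvd_mul_right
      ⟨c, IsFractionRing.injective R K ?_⟩
    have hpow : algebraMap R K b ^ k * IsLocalization.mk' K a b ^ k = algebraMap R K a ^ k := by
      rw [← mul_pow, mul_comm, IsLocalization.mk'_spec]
    rw [map_mul, map_mul, map_pow, map_pow, hc, Algebra.smul_def, ← hpow, mul_left_comm]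
  have hb : IsUnit (b : R) := by
    by_contra hb
    obtain ⟨k, hk⟩ := FiniteMultiplicity.of_not_isUnit hb (nonZeroDivisors.ne_zero hr)
    exact hk (hdvd _)
  obtain ⟨u, hu⟩ := hb
  have hmk : IsLocalization.mk' K a b = algebraMap R K (a * ↑u⁻¹) := by
    rw [IsLocalization.mk'_eq_iff_eq_mul, ← map_mul, ← hu, Units.inv_mul_cancel_right]
  exact hmk ▸ isIntegral_algebraMap

section CharacteristicPolynomial

variable [CommRing R]

theorem isAlmostIntegral_det {S ι : Type*} [CommRing S] [Algebra R S] [Fintype ι]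
    [DecidableEq ι] {M : Matrix ι ι S} {d : R} (hd : d ∈ R⁰)
    (hM : ∀ k, d • M ^ k ∈ (algebraMap R S).mapMatrix.range) : IsAlmostIntegral R M.det := by
  refine ⟨d ^ Fintype.card ι, pow_mem hd _, fun k => ?_⟩
  obtain ⟨W, hW⟩ := hM k
  exact ⟨W.det, by rw [RingHom.map_det, hW, Matrix.det_smul_of_tower, Matrix.det_pow]⟩

attribute [local instance] Polynomial.algebra

theorem isAlmostIntegral_matrix_charpoly {S ι : Type*} [CommRing S] [Algebra R S] [Fintype ι]
    [DecidableEq ι] {M : Matrix ι ι S} {d : R} (hd : d ∈ R⁰)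
    (hM : ∀ k, d • M ^ k ∈ (algebraMap R S).mapMatrix.range) :
    IsAlmostIntegral R[X] M.charpoly := by
  refine isAlmostIntegral_det
    (mem_nonZeroDivisors_of_leadingCoeff (p := C d) (by simpa using hd)) fun k => ?_
  have hX : Matrix.scalar ι (X : S[X]) ∈ (algebraMap R[X] S[X]).mapMatrix.range :=
    ⟨Matrix.scalar ι X, by simp⟩
  have hCM (m : ℕ) : C d • (-C.mapMatrix M) ^ m ∈ (algebraMap R[X] S[X]).mapMatrix.range := by
    obtain ⟨W, hW⟩ := hM m
    have hCW : (algebraMap R[X] S[X]).mapMatrix (C.mapMatrix W) =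
        C d • C.mapMatrix (M ^ m) := by
      ext1 i j
      simpa [Algebra.smul_def] using congr(C ($hW i j))
    refine ⟨(-1) ^ m * C.mapMatrix W, ?_⟩
    rw [map_mul, map_pow, map_neg, map_one, hCW, mul_smul_comm, map_pow, ← neg_pow]
  have hcomm : Commute (Matrix.scalar ι (X : S[X])) (-C.mapMatrix M) :=
    Matrix.scalar_commute _ (Commute.all X) _
  rw [Matrix.charmatrix, sub_eq_add_neg, hcomm.add_pow, Finset.smul_sum]
  refine sum_mem fun m _ => ?_
  rw [← smul_mul_assoc, ← mul_smul_comm]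
  exact mul_mem (mul_mem (pow_mem hX _) (hCM _)) (natCast_mem _ _)

theorem isAlmostIntegral_coeff_charpoly_s15 [IsDomain R] {K V ι : Type*} [Field K] [Algebra R K]
    [FaithfulSMul R K] [AddCommGroup V] [Module K V] [Module.Finite K V] [Finite ι]
    {φ : Module.End K V} (b c : Module.Basis ι K V)
    (h : ∀ k i j, c.coord i ((φ ^ k) (b j)) ∈ (algebraMap R K).range) (n : ℕ) :
    IsAlmostIntegral R (φ.charpoly.coeff n) := by
  classical
  have := Fintype.ofFinite ι
  have hrange (k : ℕ) : LinearMap.toMatrix b c (φ ^ k) ∈ (algebraMap R K).mapMatrix.range := by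
    choose W hW using h k
    exact ⟨Matrix.of W, by ext i j; simp [hW, LinearMap.toMatrix_apply]⟩
  obtain ⟨H, hH⟩ := hrange 0
  rw [pow_zero, Module.End.one_eq_id, LinearMap.toMatrix_id_eq_basis_toMatrix] at hH
  have hdet : H.det ≠ 0 := by
    have := c.invertibleToMatrix b
    have hunit := (Matrix.isUnit_iff_isUnit_det _).1 (isUnit_of_invertible (c.toMatrix b))
    rw [← hH, ← RingHom.map_det] at hunit
    exact fun h0 => hunit.ne_zero (by rw [h0, map_zero])
  rw [← LinearMap.charpoly_toMatrix φ b]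
  refine (isAlmostIntegral_matrix_charpoly (mem_nonZeroDivisors_of_ne_zero hdet)
    fun k => ?_).coeff n
  have hadj : H.det • LinearMap.toMatrix b b φ ^ k =
      (algebraMap R K).mapMatrix H.adjugate * LinearMap.toMatrix b c (φ ^ k) := by
    rw [← basis_toMatrix_mul_linearMap_toMatrix b c b, ← hH, ← mul_assoc, ← map_mul,
      Matrix.adjugate_mul, LinearMap.toMatrix_pow, ← Algebra.algebraMap_eq_smul_one,
      Algebra.smul_def]
    exact congrArg (· * _) ((Algebra.ofId R K).mapMatrix.commutes H.det).symm
  exact hadj ▸ mul_mem ⟨_, rfl⟩ (hrange k)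

theorem isIntegral_of_isIntegral_coeff_charpoly {K V : Type*} [Field K] [Algebra R K]
    [AddCommGroup V] [Module K V] [Module.Finite K V] [Algebra R (Module.End K V)]
    [IsScalarTower R K (Module.End K V)] {φ : Module.End K V}
    (h : ∀ n, IsIntegral R (φ.charpoly.coeff n)) : IsIntegral R φ := by
  have hlifts : φ.charpoly ∈ lifts (algebraMap (integralClosure R K) K) :=
    (lifts_iff_coeff_lifts _).2 fun n => ⟨⟨_, h n⟩, rfl⟩
  obtain ⟨q, hq, -, hmonic⟩ := lifts_and_natDegree_eq_and_monic hlifts φ.charpoly_monic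
  refine isIntegral_trans (A := integralClosure R K) _ ⟨q, hmonic, ?_⟩
  rw [← aeval_def, ← aeval_map_algebraMap K, hq, φ.aeval_self_charpoly]

end CharacteristicPolynomial

theorem exists_basis_forall_coord_mem {K V ι : Type*} [Field K] [AddCommGroup V] [Module K V]
    [Finite ι] (b : Module.Basis ι K V) {T : Set (Module.Dual K V)}
    (hT : Submodule.span K T = ⊤) : ∃ c : Module.Basis ι K V, ∀ i, c.coord i ∈ T := by
  classical
  have := Module.Finite.of_basis b
  let e := Module.Basis.ofSpan hT.ge
  have := Module.Finite.finite_basis e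
  let c := e.dualBasis.map (Module.evalEquiv K V).symm
  let σ := c.indexEquiv b
  have hcoord (i : ι) : (c.reindex σ).coord i = e (σ.symm i) := by
    ext v
    simp [c]
  exact ⟨c.reindex σ, fun i => hcoord i ▸ Module.Basis.ofSpan_subset hT.ge ⟨_, rfl⟩⟩

section Torsionless

variable [CommRing R] [IsDomain R] {K : Type*} [Field K] [Algebra R K]

theorem isIntegral_of_forall_apply_pow_mem_range [FaithfulSMul R K]
    (hR : completeIntegralClosure R K ≤ integralClosure R K) {B : Type*} [CommRing B]
    [Algebra R B] [Algebra K B] [IsScalarTower R K B] {T : Set (Module.Dual K B)}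
    (hT : ∀ z ≠ 0, ∃ f ∈ T, f z ≠ 0) {x : B} (hx : IsIntegral K x)
    (hTx : ∀ f ∈ T, ∀ k, f (x ^ k) ∈ (algebraMap R K).range) : IsIntegral R x := by
  let L := Algebra.adjoin K {x}
  let pb : PowerBasis K L := Algebra.adjoin.powerBasis hx
  have := pb.finite
  have hgen : (pb.gen : B) = x := rfl
  let T' : Set (Module.Dual K L) := (· ∘ₗ L.val.toLinearMap) '' T
  have hT' : Submodule.span K T' = ⊤ := by
    refine Submodule.span_eq_top_of_ne_zero fun z hz => ?_
    obtain ⟨f, hf, hfz⟩ := hT z (by simpa using hz)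
    exact ⟨_, ⟨f, hf, rfl⟩, hfz⟩
  obtain ⟨c, hc⟩ := exists_basis_forall_coord_mem pb.basis hT'
  have hmul : IsIntegral R (Algebra.lmul K L pb.gen) := by
    refine isIntegral_of_isIntegral_coeff_charpoly fun n => hR <|
      isAlmostIntegral_coeff_charpoly_s15 pb.basis c (fun k i j => ?_) n
    obtain ⟨f, hf, hfc⟩ := hc i
    rw [← hfc, ← map_pow]
    simpa [hgen, ← pow_add] using hTx f hf (k + j)
  have hgen_int : IsIntegral R pb.gen :=
    (isIntegral_algHom_iff ((Algebra.lmul K L).restrictScalars R) Algebra.lmul_injective).1 hmul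
  exact hgen_int.map (L.val.restrictScalars R)

variable [IsFractionRing R K]

theorem eq_zero_of_forall_liftBaseChange_eq_zero {M : Type*} [AddCommGroup M] [Module R M]
    (hM : Function.Injective (Module.Dual.eval R M)) {z : K ⊗[R] M}
    (hz : ∀ f : Module.Dual R M, (Algebra.linearMap R K ∘ₗ f).liftBaseChange K z = 0) :
    z = 0 := by
  obtain ⟨⟨a, d⟩, had⟩ := IsLocalizedModule.surj R⁰ (TensorProduct.mk R K M 1) z
  change (d : R) • z = 1 ⊗ₜ a at had
  have ha : a = 0 := by
    refine hM (LinearMap.ext fun f => IsFractionRing.injective R K ?_)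
    have hfa : (d : R) • (Algebra.linearMap R K ∘ₗ f).liftBaseChange K z =
        algebraMap R K (f a) := by
      rw [← LinearMap.map_smul_of_tower, had]
      simp
    simpa [hz] using hfa.symm
  have hd : algebraMap R K d ≠ 0 := by simp
  rw [ha, tmul_zero, ← algebraMap_smul K] at had
  exact (smul_eq_zero.1 had).resolve_left hd

theorem isIntegral_of_isAlgebraic_of_dual_eval_injective
    (hR : completeIntegralClosure R K ≤ integralClosure R K) {A : Type*} [CommRing A]
    [Algebra R A] (hA : Function.Injective (Module.Dual.eval R A)) {x : A}
    (hx : IsAlgebraic R x) : IsIntegral R x := by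
  let extend (f : Module.Dual R A) : Module.Dual K (K ⊗[R] A) :=
    (Algebra.linearMap R K ∘ₗ f).liftBaseChange K
  have hextend (f : Module.Dual R A) (a : A) : extend f (1 ⊗ₜ a) = algebraMap R K (f a) := by
    simp [extend]
  have hinj : Function.Injective (Algebra.TensorProduct.includeRight : A →ₐ[R] K ⊗[R] A) := by
    refine (injective_iff_map_eq_zero _).2 fun a ha => hA (LinearMap.ext fun f => ?_)
    rw [Algebra.TensorProduct.includeRight_apply] at ha
    exact IsFractionRing.injective R K (by rw [Module.Dual.eval_apply, ← hextend, ha]; simp)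
  refine (isIntegral_algHom_iff _ hinj).1 <|
    isIntegral_of_forall_apply_pow_mem_range (T := Set.range extend) hR (fun z hz => ?_)
      (hx.tmul (1 : K)).isIntegral ?_
  · contrapose! hz
    exact eq_zero_of_forall_liftBaseChange_eq_zero hA (by simpa using hz)
  · rintro _ ⟨f, rfl⟩ k
    exact ⟨f (x ^ k), by rw [← map_pow]; exact (hextend _ _).symm⟩

end Torsionless

section Quotient

variable [CommRing R]

theorem exists_le_finite_quotient_iff {A : Type*} [CommRing A] [Algebra R A] {J : Ideal A} :
    (∃ I ≤ J, Module.Finite R (A ⧸ I)) ↔ Module.Finite R (A ⧸ J) := by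
  refine ⟨fun ⟨I, hIJ, _⟩ => ?_, fun h => ⟨J, le_rfl, h⟩⟩
  exact .of_surjective (Ideal.Quotient.factorₐ R hIJ).toLinearMap
    (Ideal.Quotient.factor_surjective hIJ)

theorem finite_quotient_iff_forall_isIntegral_mk_X {σ : Type*} [Finite σ]
    {I : Ideal (MvPolynomial σ R)} :
    Module.Finite R (MvPolynomial σ R ⧸ I) ↔
      ∀ i, IsIntegral R (Ideal.Quotient.mk I (MvPolynomial.X i)) := by
  refine ⟨fun _ i => IsIntegral.of_finite R _, fun h => ?_⟩
  let π := Ideal.Quotient.mkₐ R I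
  have hX : ∀ x ∈ π '' Set.range MvPolynomial.X, IsIntegral R x := by
    rintro _ ⟨_, ⟨i, rfl⟩, rfl⟩
    exact h i
  have hfg := fg_adjoin_of_finite ((Set.finite_range MvPolynomial.X).image π) hX
  rw [← AlgHom.map_adjoin, MvPolynomial.adjoin_range_X, Algebra.map_top,
    (AlgHom.range_eq_top π).2 (Ideal.Quotient.mkₐ_surjective R I), Algebra.top_toSubmodule] at hfg
  exact ⟨hfg⟩

theorem isAlgebraic_mk_X_iff_exists_embedP_mem {n : ℕ} {I : Ideal (MvPolynomial (Fin n) R)}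
    {i : Fin n} :
    IsAlgebraic R (Ideal.Quotient.mk I (MvPolynomial.X i)) ↔
      ∃ p : R[X], 1 ≤ p.natDegree ∧ embedP i p ∈ I := by
  have haeval (p : R[X]) : aeval (Ideal.Quotient.mk I (MvPolynomial.X i)) p = 0 ↔
      embedP i p ∈ I := by
    rw [← Ideal.Quotient.eq_zero_iff_mem]
    exact (aeval_algHom_apply (Ideal.Quotient.mkₐ R I) (MvPolynomial.X i) p).congr_left
  constructor
  · rintro ⟨p, hp, hpX⟩
    have := Nontrivial.of_polynomial_ne hp
    refine ⟨p * X, by simp [natDegree_mul_X hp], (haeval _).1 ?_⟩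
    rw [map_mul, hpX, zero_mul]
  · rintro ⟨p, hp, hpI⟩
    exact ⟨p, ne_zero_of_natDegree_gt hp, (haeval p).2 hpI⟩

end Quotient

section Annihilator

/-- The translation action of the exponents `σ →₀ ℕ` on sequences: `a` sends `s` to
`b ↦ s (b + a)`. It is the action `shiftA` of the monomials, packaged as a monoid homomorphism. -/
def translation (R σ : Type*) [CommSemiring R] :
    Multiplicative (σ →₀ ℕ) →* Module.End R ((σ → ℕ) → R) where
  toFun a := LinearMap.funLeft R R fun b => b + ⇑a.toAdd
  map_one' := by ext; simp
  map_mul' a a' := by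
    ext s b
    exact congrArg s (by simp; abel)

/-- The shift action of polynomials on sequences as an algebra homomorphism, from which the
algebraic properties of `shiftA` are read off. -/
def shiftAlgHom (R σ : Type*) [CommSemiring R] :
    MvPolynomial σ R →ₐ[R] Module.End R ((σ → ℕ) → R) :=
  AddMonoidAlgebra.lift R _ _ (translation R σ)

theorem shiftAlgHom_apply [CommSemiring R] {σ : Type*} (f : MvPolynomial σ R)
    (s : (σ → ℕ) → R) : shiftAlgHom R σ f s = shiftA f s := by
  ext b
  rw [shiftAlgHom, AddMonoidAlgebra.lift_apply, Finsupp.sum, LinearMap.sum_apply, Finset.sum_apply]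
  rfl

variable [CommRing R] {σ : Type*}

/-- The annihilator ideal `Ann(s)` of a sequence under the shift action. -/
def shiftAnn (s : (σ → ℕ) → R) : Ideal (MvPolynomial σ R) where
  carrier := {f | shiftA f s = 0}
  zero_mem' := by simp [← shiftAlgHom_apply]
  add_mem' := by simp +contextual [← shiftAlgHom_apply]
  smul_mem' := by simp +contextual [← shiftAlgHom_apply]

theorem dual_eval_quotient_shiftAnn_injective (s : (σ → ℕ) → R) :
    Function.Injective (Module.Dual.eval R (MvPolynomial σ R ⧸ shiftAnn s)) := by
  let act : MvPolynomial σ R →ₗ[R] (σ → ℕ) → R :=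
    LinearMap.applyₗ s ∘ₗ (shiftAlgHom R σ).toLinearMap
  let actQuot : (MvPolynomial σ R ⧸ shiftAnn s) →ₗ[R] (σ → ℕ) → R :=
    ((shiftAnn s).restrictScalars R).liftQ act
      (fun g hg => (shiftAlgHom_apply g s).trans hg) ∘ₗ
      (Submodule.Quotient.restrictScalarsEquiv R (shiftAnn s)).symm
  refine (injective_iff_map_eq_zero _).2 fun x hx => ?_
  obtain ⟨g, rfl⟩ := Ideal.Quotient.mk_surjective x
  refine Ideal.Quotient.eq_zero_iff_mem.2 (funext fun b => ?_)
  rw [← shiftAlgHom_apply]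
  exact congr($hx (LinearMap.proj b ∘ₗ actQuot))

end Annihilator

theorem stmt15_general [CommRing R] [IsDomain R]
    (hR : completeIntegralClosure R (FractionRing R) ≤ integralClosure R (FractionRing R))
    {n : ℕ} (s : (Fin n → ℕ) → R) :
    (∃ I : Ideal (MvPolynomial (Fin n) R),
        (∀ g ∈ I, shiftA g s = 0) ∧
        Module.Finite R (MvPolynomial (Fin n) R ⧸ I)) ↔
      ∀ i : Fin n, ∃ p : Polynomial R, 1 ≤ p.natDegree ∧ shiftA (embedP i p) s = 0 :=
  calc
    _ ↔ Module.Finite R (MvPolynomial (Fin n) R ⧸ shiftAnn s) :=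
      exists_le_finite_quotient_iff
    _ ↔ ∀ i, IsIntegral R (Ideal.Quotient.mk (shiftAnn s) (MvPolynomial.X i)) :=
      finite_quotient_iff_forall_isIntegral_mk_X
    _ ↔ ∀ i, IsAlgebraic R (Ideal.Quotient.mk (shiftAnn s) (MvPolynomial.X i)) :=
      forall_congr' fun _ => ⟨IsIntegral.isAlgebraic,
        isIntegral_of_isAlgebraic_of_dual_eval_injective hR
          (dual_eval_quotient_shiftAnn_injective s)⟩
    _ ↔ _ := forall_congr' fun _ => isAlgebraic_mk_X_iff_exists_embedP_mem

/-- a linear recurring sequence whose annihilator contains a cofinite ideal is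
eventually rectilinear; conversely, over a potential domain, an eventually rectilinear
sequence has a cofinite ideal inside its annihilator. -/
theorem stmt15 [CommRing R] [IsDomain R] [UniqueFactorizationMonoid R] {n : ℕ}
    (hpot : ∀ m : ℕ,
      haveI : IsDomain (MvPowerSeries (Fin m) R) := NoZeroDivisors.to_isDomain _
      UniqueFactorizationMonoid (MvPowerSeries (Fin m) R))
    (s : (Fin n → ℕ) → R) :
    ((∃ I : Ideal (MvPolynomial (Fin n) R),
        (∀ g ∈ I, shiftA g s = 0) ∧
        Module.Finite R (MvPolynomial (Fin n) R ⧸ I)) →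
      ∀ i : Fin n, ∃ p : Polynomial R, 1 ≤ p.natDegree ∧ shiftA (embedP i p) s = 0) ∧
    ((∀ i : Fin n, ∃ p : Polynomial R, 1 ≤ p.natDegree ∧ shiftA (embedP i p) s = 0) →
      ∃ I : Ideal (MvPolynomial (Fin n) R),
        (∀ g ∈ I, shiftA g s = 0) ∧
        Module.Finite R (MvPolynomial (Fin n) R ⧸ I)) := by
  exact iff_def.1 <| stmt15_general
    (completeIntegralClosure_le_integralClosure_of_uniqueFactorizationMonoid R (FractionRing R)) s
end
end
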